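/- arXiv:1903.07961 — 2 statements merged into one kernel-verified Lean document; each statement's English description precedes it below -/
import Mathlib

section
/- For all real parameters α > 0 and β > 0 and every complex number z, the series ∑_{k=0}^∞ z^k / Γ(αk + β) defining the two-parameter Mittag-Leffler function E_{α,β}(z) is summable (converges absolutely), i.e. the function fun k : ℕ => z^k / Γ(α·k + β) is Summable, where Γ is the complex Gamma function evaluated at the real argument α·k + β. -/
/-!
For every `R > 0` and `x ≥ 1`, restricting Euler's integral for `Γ(x)` to `t > R`, where
`t ^ (x - 1) ≥ R ^ (x - 1)`, gives `Γ(x) ≥ exp (-R) * R ^ (x - 1)`. Thus `Γ(α k + β)` grows at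
least like `(R ^ α) ^ k` for every `R`. Choosing `R` with `R ^ α > ‖z‖` dominates the
Mittag-Leffler series by a convergent geometric series.
-/

/-- `Γ` eventually dominates every exponential: `Γ(x) ≥ exp (-R) * R ^ (x - 1)`, the tail of
Euler's integral beyond `R`. -/
lemma exp_neg_mul_rpow_le_Gamma {R x : ℝ} (hR : 0 < R) (hx : 1 ≤ x) :
    Real.exp (-R) * R ^ (x - 1) ≤ Real.Gamma x := by
  have hint := Real.GammaIntegral_convergent (s := x) (by linarith)
  have hsub : Set.Ioi R ⊆ Set.Ioi (0 : ℝ) := Set.Ioi_subset_Ioi hR.le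
  rw [Real.Gamma_eq_integral (by linarith), ← integral_exp_neg_Ioi R,
    ← MeasureTheory.integral_mul_const]
  calc ∫ t in Set.Ioi R, Real.exp (-t) * R ^ (x - 1)
      ≤ ∫ t in Set.Ioi R, Real.exp (-t) * t ^ (x - 1) := by
        refine MeasureTheory.setIntegral_mono_on
          ((integrableOn_exp_neg_Ioi R).mul_const _) (hint.mono_set hsub)
          measurableSet_Ioi fun t ht => ?_
        have ht' : R < t := ht
        have : R ^ (x - 1) ≤ t ^ (x - 1) :=
          Real.rpow_le_rpow hR.le ht'.le (by linarith)
        gcongr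
    _ ≤ ∫ t in Set.Ioi (0 : ℝ), Real.exp (-t) * t ^ (x - 1) := by
        refine MeasureTheory.setIntegral_mono_set hint ?_ hsub.eventuallyLE
        filter_upwards [MeasureTheory.ae_restrict_mem measurableSet_Ioi] with t ht
        exact mul_nonneg (Real.exp_pos _).le (Real.rpow_nonneg (le_of_lt ht) _)

/-- For all real parameters `α > 0` and `β > 0` and every complex
number `z`, the series `∑ k, z ^ k / Γ(α k + β)` defining the two-parameter
Mittag-Leffler function is summable, where `Γ` is the complex Gamma function
evaluated at the real argument `α * k + β`. -/
theorem mittagLeffler_summable (α β : ℝ) (hα : 0 < α) (hβ : 0 < β) (z : ℂ) :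
    Summable (fun k : ℕ => z ^ k / Complex.Gamma ((α * k + β : ℝ) : ℂ)) := by
  have hM : 0 < ‖z‖ + 1 := by positivity
  obtain ⟨R, hR, hRα⟩ : ∃ R : ℝ, 0 < R ∧ R ^ α = ‖z‖ + 1 :=
    ⟨(‖z‖ + 1) ^ α⁻¹, Real.rpow_pos_of_pos hM _, Real.rpow_inv_rpow hM.le hα.ne'⟩
  have hgeo : Summable fun k : ℕ =>
      (Real.exp (-R) * R ^ (β - 1))⁻¹ * (‖z‖ / (‖z‖ + 1)) ^ k :=
    (summable_geometric_of_lt_one (by positivity)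
      ((div_lt_one hM).2 (lt_add_one _))).mul_left _
  refine Summable.of_norm_bounded_eventually_nat hgeo ?_
  -- The Gamma bound needs `α * k + β ≥ 1`, which holds for all large `k`.
  filter_upwards [Filter.eventually_ge_atTop ⌈α⁻¹⌉₊] with k hk
  have hk' : 1 ≤ α * k := by
    have := mul_le_mul_of_nonneg_left (Nat.ceil_le.1 hk) hα.le
    rwa [mul_inv_cancel₀ hα.ne'] at this
  have hx : 1 ≤ α * k + β := by linarith
  have hΓ := exp_neg_mul_rpow_le_Gamma hR hx
  have hsplit : R ^ (α * k + β - 1) = (‖z‖ + 1) ^ k * R ^ (β - 1) := by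
    rw [add_sub_assoc, Real.rpow_add hR, Real.rpow_mul_natCast hR.le, hRα]
  have hΓpos : 0 < Real.Gamma (α * k + β) := Real.Gamma_pos_of_pos (by linarith)
  rw [Complex.Gamma_ofReal, norm_div, norm_pow, Complex.norm_real,
    Real.norm_of_nonneg hΓpos.le]
  rw [hsplit] at hΓ
  calc ‖z‖ ^ k / Real.Gamma (α * k + β)
      ≤ ‖z‖ ^ k / (Real.exp (-R) * ((‖z‖ + 1) ^ k * R ^ (β - 1))) := by
        gcongr
    _ = (Real.exp (-R) * R ^ (β - 1))⁻¹ * (‖z‖ / (‖z‖ + 1)) ^ k := by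
        have := Real.rpow_pos_of_pos hR (β - 1)
        rw [div_pow]
        field_simp
end

section
/- Fractional integration by parts for the ABC derivative (formula (8) of the paper): let 0 < α < 1, γ = α/(1−α), c = B(α)/(1−α) with B(α) = (1−α) + α/Γ(α), T > 0, let K(s) = E_{α,α}(−γ s^α) be the Mittag-Leffler kernel, and let u, v : ℝ → ℝ be continuously differentiable. Then ∫_0^T ( c ∫_0^t u′(τ) K(t − τ) dτ ) · v(t) dt = −∫_0^T u(t) · ( c ∫_t^T v′(τ) K(τ − t) dτ ) dt + c · v(T) · ∫_0^T u(t) K(T − t) dt − c · u(0) · ∫_0^T K(t) v(t) dt. That is, ∫_0^T (ᵃᵇ_0 D_t^α u)(t) v(t) dt = −∫_0^T u(t) (ᵃᵇ_T D_t^α v)(t) dt + (B(α)/(1−α)) v(T) ∫_0^T u(t) E_{α,α}(−γ(T−t)^α) dt − (B(α)/(1−α)) u(0) ∫_0^T E_{α,α}(−γ t^α) v(t) dt, where the backward (right) ABC derivative with base point T is (ᵃᵇ_T D_t^α v)(t) = c ∫_t^T v′(τ) K(τ − t) dτ. -/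
/-!
The kernel `K` is continuous on `[0, ∞)`: the Gamma function grows faster than every exponential
(`gamma_lower_bound`), so the Mittag-Leffler series converges locally uniformly and its sum is
continuous (`continuous_mittagLefflerReal`). Hence `K` may be replaced by the continuous function
`k s = E_{α,α}(-γ |s|^α)`, which agrees with `K` on `[0, ∞)`.

For continuous `w`, `g` and `k`, the substitution `s = t - τ` and Fubini's theorem on the triangle
`0 ≤ s ≤ t ≤ T` give (`integral_convolution_mul`)
`∫_0^T (∫_0^t w(τ) k(t-τ) dτ) g(t) dt = ∫_0^T k(s) ∫_s^T w(t-s) g(t) dt ds`.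
With `w = u'`, `g = v` this rewrites the left-hand side of the formula; with `w = u`, `g = v'`, and
one more interchange on the triangle, it rewrites the term with the backward derivative. At each
fixed `s` the two inner integrals differ by the boundary terms of an ordinary integration by parts,
`u(T-s) v(T) - u(0) v(s)`, and integrating these against `k` produces the two remaining terms.
-/

/-- The two-parameter Mittag-Leffler function for real parameters `α, β`
and real argument `x`: `E_{α,β}(x) = ∑_{k=0}^∞ x^k / Γ(α k + β)`,
where `Γ` is the real Gamma function. -/
noncomputable def mittagLefflerReal (α β x : ℝ) : ℝ :=
  ∑' k : ℕ, x ^ k / Real.Gamma (α * k + β)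

open MeasureTheory Set

/-- The Gamma function dominates every exponential: the part of the Euler integral over
`(M, M + 1]` already contributes a fixed multiple of `M ^ s`. -/
lemma gamma_lower_bound {M s : ℝ} (hM : 0 < M) (hs : 0 < s) :
    Real.exp (-(M + 1)) / (M + 1) * M ^ s ≤ Real.Gamma s := by
  have hint := Real.GammaIntegral_convergent hs
  have hsub : Ioc M (M + 1) ⊆ Ioi (0 : ℝ) := fun x hx => hM.trans hx.1
  rw [Real.Gamma_eq_integral hs]
  calc Real.exp (-(M + 1)) / (M + 1) * M ^ s
      = ∫ _ in Ioc M (M + 1), Real.exp (-(M + 1)) / (M + 1) * M ^ s := by simp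
    _ ≤ ∫ x in Ioc M (M + 1), Real.exp (-x) * x ^ (s - 1) := by
        apply setIntegral_mono_on (integrableOn_const (by simp)) (hint.mono_set hsub) measurableSet_Ioc
        intro x hx
        have hx0 : 0 < x := hM.trans hx.1
        rw [Real.rpow_sub_one hx0.ne', div_mul_eq_mul_div, mul_div_assoc]
        have h1 : M ^ s ≤ x ^ s := Real.rpow_le_rpow hM.le hx.1.le hs.le
        have h2 : Real.exp (-(M + 1)) ≤ Real.exp (-x) := Real.exp_le_exp.2 (by linarith [hx.2])
        have h3 : 0 ≤ x ^ s := by positivity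
        have h4 : M ^ s / (M + 1) ≤ x ^ s / x := div_le_div₀ h3 h1 hx0 hx.2
        exact mul_le_mul h2 h4 (by positivity) (by positivity)
    _ ≤ ∫ x in Ioi 0, Real.exp (-x) * x ^ (s - 1) := by
        apply setIntegral_mono_set hint _ hsub.eventuallyLE
        filter_upwards [ae_restrict_mem measurableSet_Ioi] with x hx
        have : (0 : ℝ) < x := hx
        simp only [Pi.zero_apply]
        positivity

lemma summable_mittagLeffler {α β R : ℝ} (hα : 0 < α) (hβ : 0 < β) (hR : 0 < R) :
    Summable fun k : ℕ => R ^ k / Real.Gamma (α * k + β) := by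
  -- With this `M` one has `M ^ α = 2 R`, so the series is dominated by a multiple of `∑ 2⁻ᵏ`.
  set M : ℝ := (2 * R) ^ (1 / α) with hMdef
  have hM : 0 < M := by positivity
  have hMα : M ^ α = 2 * R := by
    rw [hMdef, ← Real.rpow_mul (by positivity), one_div_mul_cancel hα.ne', Real.rpow_one]
  set C : ℝ := Real.exp (-(M + 1)) / (M + 1) with hC
  have hCpos : 0 < C := by positivity
  have hpos : ∀ k : ℕ, 0 < α * k + β := fun k => by positivity
  refine Summable.of_nonneg_of_le
    (fun k => div_nonneg (by positivity) (Real.Gamma_pos_of_pos (hpos k)).le) (fun k => ?_)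
    (summable_geometric_two.mul_left (1 / (C * M ^ β)))
  have h := gamma_lower_bound hM (hpos k)
  rw [Real.rpow_add hM, Real.rpow_mul hM.le, hMα, Real.rpow_natCast] at h
  calc R ^ k / Real.Gamma (α * k + β) ≤ R ^ k / (C * ((2 * R) ^ k * M ^ β)) := by
        apply div_le_div_of_nonneg_left (by positivity) (by positivity) h
    _ = 1 / (C * M ^ β) * (1 / 2) ^ k := by
        rw [mul_pow, div_pow, one_pow]
        field_simp

lemma continuous_mittagLefflerReal {α β : ℝ} (hα : 0 < α) (hβ : 0 < β) :
    Continuous (mittagLefflerReal α β) := by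
  rw [continuous_iff_continuousAt]
  intro x₀
  have hR : 0 < |x₀| + 1 := by positivity
  have hon : ContinuousOn (mittagLefflerReal α β) (Metric.ball 0 (|x₀| + 1)) := by
    unfold mittagLefflerReal
    refine continuousOn_tsum (fun k => by fun_prop) (summable_mittagLeffler hα hβ hR) ?_
    intro k x hx
    rw [mem_ball_zero_iff, Real.norm_eq_abs] at hx
    have hG : 0 < Real.Gamma (α * k + β) := Real.Gamma_pos_of_pos (by positivity)
    rw [norm_div, norm_pow, Real.norm_eq_abs, Real.norm_eq_abs, abs_of_pos hG]
    gcongr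
  exact hon.continuousAt (Metric.isOpen_ball.mem_nhds (by simp))

/-- Fubini's theorem on the triangle `0 ≤ s ≤ t ≤ T`. -/
lemma integral_triangle_swap {T : ℝ} (hT : 0 < T) {f : ℝ → ℝ → ℝ}
    (hf : Continuous (Function.uncurry f)) :
    ∫ t in (0 : ℝ)..T, ∫ s in (0 : ℝ)..t, f t s = ∫ s in (0 : ℝ)..T, ∫ t in s..T, f t s := by
  set A : Set (ℝ × ℝ) := {p | p.2 ≤ p.1} with hA
  have hAm : MeasurableSet A := measurableSet_le measurable_snd measurable_fst
  set F : ℝ → ℝ → ℝ := fun t s => A.indicator (Function.uncurry f) (t, s) with hF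
  have hint : IntegrableOn (Function.uncurry F) (uIoc 0 T ×ˢ uIoc 0 T) := by
    have h1 : IntegrableOn (Function.uncurry f) (Icc 0 T ×ˢ Icc 0 T) :=
      hf.continuousOn.integrableOn_compact (isCompact_Icc.prod isCompact_Icc)
    have h2 : IntegrableOn (Function.uncurry f) (uIoc 0 T ×ˢ uIoc 0 T) := by
      rw [uIoc_of_le hT.le]
      exact h1.mono_set (prod_mono Ioc_subset_Icc_self Ioc_subset_Icc_self)
    exact h2.indicator hAm
  have hl : ∀ t ∈ uIcc 0 T, ∫ s in (0 : ℝ)..t, f t s = ∫ s in (0 : ℝ)..T, F t s := by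
    intro t ht
    rw [uIcc_of_le hT.le] at ht
    have : F t = (Iic t).indicator (f t) := by
      ext s; simp [hF, hA, indicator, Function.uncurry]
    rw [this, intervalIntegral.integral_of_le hT.le, intervalIntegral.integral_of_le ht.1,
      setIntegral_indicator measurableSet_Iic, Ioc_inter_Iic, min_eq_right ht.2]
  have hr : ∀ s ∈ uIoc 0 T, ∫ t in s..T, f t s = ∫ t in (0 : ℝ)..T, F t s := by
    intro s hs
    rw [uIoc_of_le hT.le] at hs
    have : (fun t => F t s) = (Ici s).indicator (fun t => f t s) := by
      ext t; simp [hF, hA, indicator, Function.uncurry]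
    have hset : Ioc 0 T ∩ Ici s = Icc s T := by
      ext t
      simp only [mem_inter_iff, mem_Ioc, mem_Ici, mem_Icc]
      exact ⟨fun h => ⟨h.2, h.1.2⟩, fun h => ⟨⟨hs.1.trans_le h.1, h.2⟩, h.1⟩⟩
    rw [this, intervalIntegral.integral_of_le hT.le, intervalIntegral.integral_of_le hs.2,
      setIntegral_indicator measurableSet_Ici, hset, integral_Icc_eq_integral_Ioc]
  rw [intervalIntegral.integral_congr hl, intervalIntegral_intervalIntegral_swap hint]
  refine (intervalIntegral.integral_congr_ae (Filter.Eventually.of_forall fun s hs => ?_)).symm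
  exact hr s hs

lemma integral_convolution_mul {T : ℝ} (hT : 0 < T) {w g k : ℝ → ℝ}
    (hw : Continuous w) (hg : Continuous g) (hk : Continuous k) :
    ∫ t in (0 : ℝ)..T, (∫ τ in (0 : ℝ)..t, w τ * k (t - τ)) * g t
      = ∫ s in (0 : ℝ)..T, k s * ∫ t in s..T, w (t - s) * g t := by
  have h1 : ∀ t, (∫ τ in (0 : ℝ)..t, w τ * k (t - τ)) * g t
      = ∫ s in (0 : ℝ)..t, k s * (w (t - s) * g t) := by
    intro t
    have h := intervalIntegral.integral_comp_sub_left (a := 0) (b := t)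
      (fun τ => w τ * k (t - τ)) t
    simp only [sub_sub_cancel, sub_self, sub_zero] at h
    rw [← h, ← intervalIntegral.integral_mul_const]
    congr 1; ext s; ring
  simp_rw [h1]
  rw [integral_triangle_swap hT (f := fun t s => k s * (w (t - s) * g t)) (by fun_prop)]
  simp_rw [intervalIntegral.integral_const_mul]

/-- Continuity in `s` of the inner integrals, needed to split the outer integral. -/
lemma continuous_integral_shift {T : ℝ} {w g : ℝ → ℝ} (hw : Continuous w) (hg : Continuous g) :
    Continuous fun s => ∫ t in s..T, w (t - s) * g t := by
  simp_rw [intervalIntegral.integral_symm T]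
  exact (intervalIntegral.continuous_parametric_intervalIntegral_of_continuous
    (f := fun s t => w (t - s) * g t) (by fun_prop) continuous_id).neg

/-- The integration by parts formula, without the normalising constant, for an arbitrary
continuous kernel `k`. -/
lemma convolution_integration_by_parts {T : ℝ} (hT : 0 < T) {k u v : ℝ → ℝ}
    (hk : Continuous k) (hu : ContDiff ℝ 1 u) (hv : ContDiff ℝ 1 v) :
    (∫ t in (0 : ℝ)..T, (∫ τ in (0 : ℝ)..t, deriv u τ * k (t - τ)) * v t)
      = -(∫ t in (0 : ℝ)..T, u t * ∫ τ in t..T, deriv v τ * k (τ - t))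
        + v T * (∫ t in (0 : ℝ)..T, u t * k (T - t))
        - u 0 * (∫ t in (0 : ℝ)..T, k t * v t) := by
  have cu := hu.continuous
  have cv := hv.continuous
  have cu' : Continuous (deriv u) := hu.continuous_deriv le_rfl
  have cv' : Continuous (deriv v) := hv.continuous_deriv le_rfl
  have du : ∀ x, HasDerivAt u (deriv u x) x :=
    fun x => (hu.differentiable one_ne_zero x).hasDerivAt
  have dv : ∀ x, HasDerivAt v (deriv v x) x :=
    fun x => (hv.differentiable one_ne_zero x).hasDerivAt
  have hback : (∫ t in (0 : ℝ)..T, u t * ∫ τ in t..T, deriv v τ * k (τ - t))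
      = ∫ s in (0 : ℝ)..T, k s * ∫ t in s..T, u (t - s) * deriv v t := by
    rw [← integral_convolution_mul hT cu cv' hk]
    simp_rw [← intervalIntegral.integral_mul_const, ← intervalIntegral.integral_const_mul]
    rw [integral_triangle_swap hT (f := fun t s => u s * k (t - s) * deriv v t) (by fun_prop)]
    congr 1; ext t; congr 1; ext τ; ring
  have hparts : ∀ s, ∫ t in s..T, deriv u (t - s) * v t
      = u (T - s) * v T - u 0 * v s - ∫ t in s..T, u (t - s) * deriv v t := by
    intro s
    have h := intervalIntegral.integral_mul_deriv_eq_deriv_mul (a := s) (b := T)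
      (u := fun t => u (t - s)) (u' := fun t => deriv u (t - s)) (v := v) (v' := deriv v)
      (fun x _ => (du (x - s)).comp_sub_const x s) (fun x _ => dv x)
      (Continuous.intervalIntegrable (by fun_prop) _ _) (cv'.intervalIntegrable _ _)
    simp only [sub_self] at h
    linarith
  have hT1 : (∫ t in (0 : ℝ)..T, u t * k (T - t)) = ∫ s in (0 : ℝ)..T, k s * u (T - s) := by
    have h := intervalIntegral.integral_comp_sub_left (a := 0) (b := T)
      (fun t => u t * k (T - t)) T
    simp only [sub_sub_cancel, sub_self, sub_zero] at h
    rw [← h]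
    congr 1; ext s; ring
  have cB := continuous_integral_shift (T := T) cu cv'
  rw [hback, hT1, integral_convolution_mul hT cu' cv hk]
  have hsplit : ∀ s, k s * ∫ t in s..T, deriv u (t - s) * v t
      = v T * (k s * u (T - s)) - u 0 * (k s * v s)
        - k s * ∫ t in s..T, u (t - s) * deriv v t := by
    intro s; rw [hparts]; ring
  simp_rw [hsplit]
  rw [intervalIntegral.integral_sub
      (Continuous.intervalIntegrable (by fun_prop) _ _)
      (Continuous.intervalIntegrable (by fun_prop) _ _),
    intervalIntegral.integral_sub
      (Continuous.intervalIntegrable (by fun_prop) _ _)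
      (Continuous.intervalIntegrable (by fun_prop) _ _),
    intervalIntegral.integral_const_mul, intervalIntegral.integral_const_mul]
  ring

/-- Fractional integration by parts for the ABC derivative
(formula (8) of the paper). Let `0 < α < 1`, `γ = α / (1 - α)`,
`c = B(α)/(1-α)` with `B(α) = (1-α) + α/Γ(α)`, `T > 0`,
`K s = E_{α,α}(-γ s^α)` the Mittag-Leffler kernel, and let
`u, v : ℝ → ℝ` be continuously differentiable. Then
`∫_0^T (ᵃᵇ₀D_t^α u)(t) v(t) dt
  = - ∫_0^T u(t) (ᵃᵇ_T D_t^α v)(t) dt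
    + c v(T) ∫_0^T u(t) K(T - t) dt - c u(0) ∫_0^T K(t) v(t) dt`,
where `(ᵃᵇ₀D_t^α u)(t) = c ∫_0^t u'(τ) K(t - τ) dτ` and the backward
ABC derivative is `(ᵃᵇ_T D_t^α v)(t) = c ∫_t^T v'(τ) K(τ - t) dτ`. -/
theorem abc_integration_by_parts (α : ℝ) (hα0 : 0 < α) (hα1 : α < 1)
    (γ : ℝ) (hγ : γ = α / (1 - α))
    (c : ℝ) (hc : c = ((1 - α) + α / Real.Gamma α) / (1 - α))
    (T : ℝ) (hT : 0 < T)
    (K : ℝ → ℝ) (hK : ∀ s, K s = mittagLefflerReal α α (-γ * s ^ α))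
    (u v : ℝ → ℝ) (hu : ContDiff ℝ 1 u) (hv : ContDiff ℝ 1 v) :
    (∫ t in (0:ℝ)..T, (c * ∫ τ in (0:ℝ)..t, deriv u τ * K (t - τ)) * v t)
      = -(∫ t in (0:ℝ)..T, u t * (c * ∫ τ in t..T, deriv v τ * K (τ - t)))
        + c * v T * (∫ t in (0:ℝ)..T, u t * K (T - t))
        - c * u 0 * (∫ t in (0:ℝ)..T, K t * v t) := by
  -- The continuous function agreeing with `K` on `[0, ∞)`.
  set k : ℝ → ℝ := fun s => mittagLefflerReal α α (-γ * |s| ^ α) with hkdef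
  have hk : Continuous k := by
    have h : Continuous fun s : ℝ => |s| ^ α :=
      continuous_abs.rpow_const fun _ => Or.inr hα0.le
    exact (continuous_mittagLefflerReal hα0 hα0).comp (continuous_const.mul h)
  have hKk : ∀ s, 0 ≤ s → K s = k s := by
    intro s hs; rw [hK, hkdef]; simp only [abs_of_nonneg hs]
  have hmem : ∀ {t}, t ∈ uIcc 0 T → 0 ≤ t ∧ t ≤ T := by
    intro t ht; rwa [uIcc_of_le hT.le] at ht
  have e1 : (∫ t in (0:ℝ)..T, (c * ∫ τ in (0:ℝ)..t, deriv u τ * K (t - τ)) * v t)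
      = c * ∫ t in (0:ℝ)..T, (∫ τ in (0:ℝ)..t, deriv u τ * k (t - τ)) * v t := by
    rw [← intervalIntegral.integral_const_mul]
    refine intervalIntegral.integral_congr fun t ht => ?_
    have : ∫ τ in (0:ℝ)..t, deriv u τ * K (t - τ) = ∫ τ in (0:ℝ)..t, deriv u τ * k (t - τ) := by
      refine intervalIntegral.integral_congr fun τ hτ => ?_
      rw [uIcc_of_le (hmem ht).1] at hτ
      simp only [hKk _ (sub_nonneg.2 hτ.2)]
    simp only [this, mul_assoc]
  have e2 : (∫ t in (0:ℝ)..T, u t * (c * ∫ τ in t..T, deriv v τ * K (τ - t)))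
      = c * ∫ t in (0:ℝ)..T, u t * ∫ τ in t..T, deriv v τ * k (τ - t) := by
    rw [← intervalIntegral.integral_const_mul]
    refine intervalIntegral.integral_congr fun t ht => ?_
    have : ∫ τ in t..T, deriv v τ * K (τ - t) = ∫ τ in t..T, deriv v τ * k (τ - t) := by
      refine intervalIntegral.integral_congr fun τ hτ => ?_
      rw [uIcc_of_le (hmem ht).2] at hτ
      simp only [hKk _ (sub_nonneg.2 hτ.1)]
    simp only [this]
    ring
  have e3 : (∫ t in (0:ℝ)..T, u t * K (T - t)) = ∫ t in (0:ℝ)..T, u t * k (T - t) := by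
    refine intervalIntegral.integral_congr fun t ht => ?_
    simp only [hKk _ (sub_nonneg.2 (hmem ht).2)]
  have e4 : (∫ t in (0:ℝ)..T, K t * v t) = ∫ t in (0:ℝ)..T, k t * v t := by
    refine intervalIntegral.integral_congr fun t ht => ?_
    simp only [hKk _ (hmem ht).1]
  rw [e1, e2, e3, e4, convolution_integration_by_parts hT hk hu hv]
  ring
end
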